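/- Let (k,′) be a differential field of characteristic zero, α, β ∈ kˣ, and Q = (α,β)_k. For every derivation d on Q restricting to ′ on k, there exists a differential field extension (L,′) of (k,′) with transcendence degree at most 3 over k such that (Q,d) is split by (L,′). -/

import Mathlib

open scoped TensorProduct

/-- A derivation on a (possibly noncommutative) ring: an additive map satisfying the
Leibniz rule. -/
structure IsRingDeriv {A : Type*} [Ring A] (d : A → A) : Prop where
  map_add : ∀ x y, d (x + y) = d x + d y
  leibniz : ∀ x y, d (x * y) = d x * y + x * d y

/-- The derivation `d` on the `k`-algebra `A` restricts to the derivation `δ` on `k`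
(along `algebraMap k A`). -/
def RestrictsTo {k A : Type*} [CommRing k] [Ring A] [Algebra k A]
    (δ : k → k) (d : A → A) : Prop :=
  ∀ c : k, d (algebraMap k A c) = algebraMap k A (δ c)

/-- The differential algebra `(Q, d)` over `(k, δk)` is split by the differential field
`(L, δL)`: there is an `L`-algebra isomorphism `L ⊗[k] Q ≃ M₂(L)` intertwining the
induced derivation `d* = δL ⊗ id + id ⊗ d` with the coordinate-wise derivation on `M₂(L)`. -/
def DiffSplits (k : Type*) [Field k] (Q : Type*) [Ring Q] [Algebra k Q]
    (d : Q → Q) (L : Type*) [Field L] [Algebra k L] (δL : L → L) : Prop :=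
  ∃ D : L ⊗[k] Q → L ⊗[k] Q,
    IsRingDeriv D ∧
    (∀ (y : L) (x : Q), D (y ⊗ₜ[k] x) = δL y ⊗ₜ[k] x + y ⊗ₜ[k] d x) ∧
    ∃ φ : (L ⊗[k] Q) ≃ₐ[L] Matrix (Fin 2) (Fin 2) L,
      ∀ z, φ (D z) = (φ z).map δL

/-- The transcendence degree of `L` over `k` is at least `n`: there are `n` algebraically
independent elements. -/
def TrdegGE (k L : Type*) [CommRing k] [CommRing L] [Algebra k L] (n : ℕ) : Prop :=
  ∃ f : Fin n → L, AlgebraicIndependent k f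

/-- The transcendence degree of `L` over `k` is at most `n`: there is no algebraically
independent family of `n + 1` elements. -/
def TrdegLE (k L : Type*) [CommRing k] [CommRing L] [Algebra k L] (n : ℕ) : Prop :=
  ∀ f : Fin (n + 1) → L, ¬ AlgebraicIndependent k f

universe u

/-!
The `k`-algebra `Q` becomes `M₂(F)` over the separable closure `F` of `k`, and `′` extends to `F`
since separable algebraic extensions are formally étale. Derivations of `M₂(F)` which vanish on the
centre are inner, so there `d*` is the coordinate-wise derivation plus `⁅M, ·⁆` for some matrix `M`.
An invertible matrix `G` with `G′ = G M - f G`, for a scalar `f`, over an extension of `F`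
conjugates `d*` into the coordinate-wise derivation. Such a `G` only matters up to scaling, and the
generic matrix with one entry normalized to `1` provides one over the function field of `PGL₂` over
`F`, whose transcendence degree over `k` is `2² - 1 = 3`.
-/

open scoped DualNumber
open TensorProduct MvPolynomial

namespace IsRingDeriv

section Ring

variable {A B : Type*} [Ring A] [Ring B] {d : A → A}

theorem map_zero (hd : IsRingDeriv d) : d 0 = 0 := by
  simpa using hd.map_add 0 0

theorem map_one (hd : IsRingDeriv d) : d 1 = 0 := by
  simpa using hd.leibniz 1 1

protected theorem sub {d' : A → A} (hd : IsRingDeriv d) (hd' : IsRingDeriv d') :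
    IsRingDeriv fun x => d x - d' x where
  map_add x y := by rw [hd.map_add, hd'.map_add]; abel
  leibniz x y := by rw [hd.leibniz, hd'.leibniz]; noncomm_ring

theorem map_sum (hd : IsRingDeriv d) {ι : Type*} (s : Finset ι) (f : ι → A) :
    d (∑ i ∈ s, f i) = ∑ i ∈ s, d (f i) :=
  _root_.map_sum (AddMonoidHom.mk' d hd.map_add) f s

theorem conj_ringEquiv (hd : IsRingDeriv d) (e : A ≃+* B) :
    IsRingDeriv fun x => e (d (e.symm x)) where
  map_add x y := by simp only [_root_.map_add, hd.map_add]
  leibniz x y := by simp [hd.leibniz]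

theorem map_units_inv (hd : IsRingDeriv d) (g : Aˣ) : d ↑g⁻¹ = -(↑g⁻¹ * d g * ↑g⁻¹) := by
  have h : d ↑g⁻¹ * g + ↑g⁻¹ * d g = 0 := by rw [← hd.leibniz, g.inv_mul, hd.map_one]
  rw [← neg_mul, ← eq_neg_of_add_eq_zero_left h, mul_assoc, g.mul_inv, mul_one]

theorem map_units_conj (hd : IsRingDeriv d) {g : Aˣ} {m : A} (hg : d g = g * m) (x : A) :
    d (g * x * ↑g⁻¹) = g * (d x + ⁅m, x⁆) * ↑g⁻¹ := by
  have hinv : d ↑g⁻¹ = -(m * ↑g⁻¹) := by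
    rw [hd.map_units_inv, hg, ← mul_assoc, g.inv_mul, one_mul]
  rw [hd.leibniz, hd.leibniz, hg, hinv, Ring.lie_def]
  noncomm_ring

end Ring

theorem map_smul {R A : Type*} [CommRing R] [Ring A] [Algebra R A] {δ : R → R} {d : A → A}
    (hd : IsRingDeriv d) (h : RestrictsTo δ d) (c : R) (x : A) :
    d (c • x) = δ c • x + c • d x := by
  simp only [Algebra.smul_def, hd.leibniz, h c]

theorem mapMatrix {R n : Type*} [CommRing R] [Fintype n] [DecidableEq n] {δ : R → R}
    (hδ : IsRingDeriv δ) : IsRingDeriv fun M : Matrix n n R => M.map δ where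
  map_add M N := Matrix.map_add δ hδ.map_add M N
  leibniz M N := by
    ext i j
    simp only [Matrix.map_apply, Matrix.mul_apply, hδ.map_sum, hδ.leibniz, Finset.sum_add_distrib,
      Matrix.add_apply]

theorem restrictsTo_mapMatrix {R n : Type*} [CommRing R] [Fintype n] [DecidableEq n]
    {δ : R → R} (hδ : IsRingDeriv δ) :
    RestrictsTo δ fun M : Matrix n n R => M.map δ := fun c => by
  simp only [Matrix.algebraMap_eq_diagonal, Matrix.diagonal_map hδ.map_zero]
  rfl

section Extension

variable {R S : Type*} [CommRing R] [CommRing S] [Algebra R S] {δ : R → R}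

/-- A derivation of a commutative ring, bundled as a `ℤ`-linear `Derivation`. -/
def toDerivation (hδ : IsRingDeriv δ) : Derivation ℤ R R :=
  .mk' (AddMonoidHom.mk' δ hδ.map_add).toIntLinearMap fun x y =>
    (hδ.leibniz x y).trans (by simp [mul_comm, add_comm])

@[simp]
theorem toDerivation_apply (hδ : IsRingDeriv δ) (x : R) : hδ.toDerivation x = δ x := rfl

theorem of_derivation (D : Derivation ℤ R R) : IsRingDeriv D where
  map_add := _root_.map_add D
  leibniz x y := by rw [D.leibniz, smul_eq_mul, smul_eq_mul, mul_comm y, add_comm]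

-- Since `Ω[S⁄ℤ] = S ⊗[R] Ω[R⁄ℤ]`, derivations of `R` extend uniquely to `S`.
theorem exists_extension_of_formallyEtale [Algebra.FormallyEtale R S] (hδ : IsRingDeriv δ) :
    ∃ δS : S → S, IsRingDeriv δS ∧ RestrictsTo δ δS := by
  let ω : Ω[S⁄ℤ] →ₗ[S] S :=
    (Algebra.linearMap R S ∘ₗ hδ.toDerivation.liftKaehlerDifferential).liftBaseChange S ∘ₗ
      (KaehlerDifferential.tensorKaehlerEquivOfFormallyEtale ℤ R S).symm
  refine ⟨ω.compDer (KaehlerDifferential.D ℤ S), of_derivation _, fun c => ?_⟩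
  simp [ω, KaehlerDifferential.tensorKaehlerEquivOfFormallyEtale_symm_D_algebraMap]

variable (S) in
/-- The ring homomorphism `c ↦ c + (δ c) ε` to the dual numbers over an algebra, which encodes a
derivation as an infinitesimal deformation of the structure map. -/
def toDualNumber (hδ : IsRingDeriv δ) : R →+* S[ε] where
  toFun c := TrivSqZeroExt.inl (algebraMap R S c) + TrivSqZeroExt.inr (algebraMap R S (δ c))
  map_one' := by ext <;> simp [hδ.map_one]
  map_zero' := by ext <;> simp [hδ.map_zero]
  map_mul' x y := by ext <;> simp [-DualNumber.inr_eq_smul_eps, hδ.leibniz, mul_comm, add_comm]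
  map_add' x y := by ext <;> simp [-DualNumber.inr_eq_smul_eps, hδ.map_add]

theorem snd_of_fst_eq (g : S →+* S[ε]) (hg : ∀ x, (g x).fst = x) :
    IsRingDeriv fun x => (g x).snd where
  map_add x y := by simp
  leibniz x y := by simp [hg, mul_comm, add_comm]

theorem exists_extension_mvPolynomial {σ : Type*} (hδ : IsRingDeriv δ)
    (p : σ → MvPolynomial σ R) :
    ∃ D : MvPolynomial σ R → MvPolynomial σ R,
      IsRingDeriv D ∧ RestrictsTo δ D ∧ ∀ i, D (X i) = p i := by
  let g : MvPolynomial σ R →+* (MvPolynomial σ R)[ε] :=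
    eval₂Hom (hδ.toDualNumber _) fun i => TrivSqZeroExt.inl (X i) + TrivSqZeroExt.inr (p i)
  have hg (f) : (g f).fst = f := by
    have : (TrivSqZeroExt.fstHom ℤ _ _).toRingHom.comp g = .id (MvPolynomial σ R) := by
      ext <;> simp [g, toDualNumber, algebraMap_eq]
    exact RingHom.congr_fun this f
  refine ⟨fun f => (g f).snd, snd_of_fst_eq g hg, fun c => ?_, fun i => ?_⟩
  · simp [g, toDualNumber, algebraMap_eq]
  · simp [g]

end Extension

section Inner

variable {n R : Type*} [CommRing R] [Fintype n] [DecidableEq n]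

-- The tensor `∑ Eᵢₒ ⊗ Eₒᵢ` commutes with every matrix, so applying `D` to its left factor produces
-- `M` with `M * X = D X + X * M`.
theorem exists_eq_lie {D : Matrix n n R → Matrix n n R}
    (hD : IsRingDeriv D) (h0 : RestrictsTo (0 : R → R) D) :
    ∃ M : Matrix n n R, ∀ X, D X = ⁅M, X⁆ := by
  cases isEmpty_or_nonempty n with
  | inl _ => exact ⟨0, fun X => Subsingleton.elim _ _⟩
  | inr h =>
    obtain ⟨o⟩ := h
    let E (i j : n) : Matrix n n R := .single i j 1
    refine ⟨∑ i, D (E i o) * E o i, fun X => ?_⟩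
    have hcol (i) : X * E i o = ∑ j, X j i • E j o := by
      ext a b; simp [E, Matrix.mul_apply, Matrix.sum_apply, Matrix.single_apply, ite_and]
    have hrow (j) : E o j * X = ∑ i, X j i • E o i := by
      ext a b; simp [E, Matrix.mul_apply, Matrix.sum_apply, Matrix.single_apply, ite_and]
    have h_left : (∑ i, D (E i o) * E o i) * X = ∑ i, D (X * E i o) * E o i := by
      simp_rw [hcol, hD.map_sum, hD.map_smul h0, Pi.zero_apply, zero_smul, zero_add, Finset.sum_mul,
        mul_assoc, hrow, Finset.mul_sum, smul_mul_assoc, mul_smul_comm]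
      exact Finset.sum_comm
    have hone : ∑ i, E i o * E o i = 1 := by simp [E, Matrix.sum_single_one]
    have h_right : ∑ i, D (X * E i o) * E o i = D X + X * ∑ i, D (E i o) * E o i := by
      simp only [hD.leibniz, add_mul, Finset.sum_add_distrib, mul_assoc, ← Finset.mul_sum, hone,
        mul_one]
    rw [Ring.lie_def, h_left, h_right, add_sub_cancel_right]

theorem exists_eq_map_add_lie {δ : R → R} {Δ : Matrix n n R → Matrix n n R}
    (hΔ : IsRingDeriv Δ) (hδ : IsRingDeriv δ) (h : RestrictsTo δ Δ) :
    ∃ M : Matrix n n R, ∀ X, Δ X = X.map δ + ⁅M, X⁆ := by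
  have hscalar : RestrictsTo (0 : R → R) fun X => Δ X - X.map δ := fun c => by
    simp only [h c, hδ.restrictsTo_mapMatrix c, sub_self, Pi.zero_apply, _root_.map_zero]
  obtain ⟨M, hM⟩ := (hΔ.sub hδ.mapMatrix).exists_eq_lie hscalar
  exact ⟨M, fun X => sub_eq_iff_eq_add'.mp (hM X)⟩

end Inner

end IsRingDeriv

theorem RestrictsTo.trans {k S T : Type*} [CommRing k] [CommRing S] [Ring T]
    [Algebra k S] [Algebra S T] [Algebra k T] [IsScalarTower k S T] {δ : k → k} {δS : S → S}
    {δT : T → T} (hS : RestrictsTo δ δS) (hT : RestrictsTo δS δT) : RestrictsTo δ δT := fun c => by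
  rw [IsScalarTower.algebraMap_apply k S T, hT, hS, ← IsScalarTower.algebraMap_apply]

section Twist

variable {k F A n : Type*} [CommRing k] [CommRing F] [Algebra k F] [Ring A] [Algebra k A]
  {δ : k → k} {δF : F → F} {d : A → A}

theorem IsRingDeriv.exists_tensorProduct (hδF : IsRingDeriv δF) (hF : RestrictsTo δ δF)
    (hd : IsRingDeriv d) (hA : RestrictsTo δ d) :
    ∃ D : F ⊗[k] A → F ⊗[k] A,
      IsRingDeriv D ∧ ∀ y x, D (y ⊗ₜ[k] x) = δF y ⊗ₜ[k] x + y ⊗ₜ[k] d x := by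
  let D : F ⊗[k] A →+ F ⊗[k] A := TensorProduct.liftAddHom
    (.mk' (fun y => .mk' (fun x => δF y ⊗ₜ[k] x + y ⊗ₜ[k] d x)
      fun x x' => by rw [hd.map_add, tmul_add, tmul_add]; abel)
      fun y y' => by ext x; simp [hδF.map_add, add_tmul]; abel)
    fun c y x => by
      change δF (c • y) ⊗ₜ x + (c • y) ⊗ₜ d x = δF y ⊗ₜ (c • x) + y ⊗ₜ d (c • x)
      rw [hδF.map_smul hF, hd.map_smul hA]
      simp only [add_tmul, tmul_add, smul_tmul]
      abel
  have hD (y x) : D (y ⊗ₜ x) = δF y ⊗ₜ x + y ⊗ₜ d x := rfl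
  refine ⟨D, ⟨D.map_add, fun z w => ?_⟩, hD⟩
  induction z with
  | zero => simp
  | add z z' hz hz' => simp only [add_mul, D.map_add, hz, hz']; abel
  | tmul y x =>
    induction w with
    | zero => simp
    | add w w' hw hw' => simp only [mul_add, D.map_add, hw, hw']; abel
    | tmul y' x' =>
      simp only [Algebra.TensorProduct.tmul_mul_tmul, hD, hδF.leibniz, hd.leibniz, add_mul, mul_add,
        add_tmul, tmul_add]
      abel

variable [Fintype n] [DecidableEq n]

theorem exists_map_tmul_eq_map_add_lie (hδF : IsRingDeriv δF) (hF : RestrictsTo δ δF)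
    (hd : IsRingDeriv d) (hA : RestrictsTo δ d) (e : F ⊗[k] A ≃ₐ[F] Matrix n n F) :
    ∃ M : Matrix n n F, ∀ x, e (1 ⊗ₜ d x) = (e (1 ⊗ₜ x)).map δF + ⁅M, e (1 ⊗ₜ x)⁆ := by
  obtain ⟨D, hD, hDtmul⟩ := hδF.exists_tensorProduct hF hd hA
  have hscalar : RestrictsTo δF fun X => e (D (e.symm X)) := fun c => by
    simp only [AlgEquiv.commutes, Algebra.TensorProduct.algebraMap_apply, hDtmul, hd.map_one,
      tmul_zero, add_zero]
    exact e.commutes (δF c)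
  obtain ⟨M, hM⟩ := (hD.conj_ringEquiv e.toRingEquiv).exists_eq_map_add_lie hδF hscalar
  refine ⟨M, fun x => ?_⟩
  simpa [hDtmul, hδF.map_one] using hM (e (1 ⊗ₜ x))

variable {L : Type*} [CommRing L] [Algebra k L] [Algebra F L]

variable (L) in
theorem exists_algEquiv_matrix_baseChange [IsScalarTower k F L]
    (e : F ⊗[k] A ≃ₐ[F] Matrix n n F) :
    ∃ e' : L ⊗[k] A ≃ₐ[L] Matrix n n L,
      ∀ y x, e' (y ⊗ₜ x) = y • (e (1 ⊗ₜ x)).map (algebraMap F L) := by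
  let matrixEquiv : L ⊗[F] Matrix n n F ≃ₐ[L] Matrix n n L :=
    .ofRingEquiv (f := (matrixEquivTensor n F L).symm.toRingEquiv) fun y => by
      change (matrixEquivTensor n F L).symm (y ⊗ₜ 1) = _
      rw [matrixEquivTensor_apply_symm, Matrix.map_one _ (map_zero _) (map_one _),
        Algebra.algebraMap_eq_smul_one]
  let cancelEquiv : L ⊗[k] A ≃ₐ[L] L ⊗[F] (F ⊗[k] A) :=
    (Algebra.TensorProduct.congr (Algebra.TensorProduct.rid F L L).symm .refl).trans
      (Algebra.TensorProduct.assoc k F L L F A)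
  exact ⟨cancelEquiv.trans ((Algebra.TensorProduct.congr .refl e).trans matrixEquiv),
    fun _ _ => rfl⟩

theorem map_derivation_eq_map_add_lie {δL : L → L} (hδL : IsRingDeriv δL)
    (hL : RestrictsTo δF δL) {e : F ⊗[k] A ≃ₐ[F] Matrix n n F} {M : Matrix n n F}
    (hM : ∀ x, e (1 ⊗ₜ d x) = (e (1 ⊗ₜ x)).map δF + ⁅M, e (1 ⊗ₜ x)⁆)
    {e' : L ⊗[k] A ≃ₐ[L] Matrix n n L}
    (he' : ∀ y x, e' (y ⊗ₜ x) = y • (e (1 ⊗ₜ x)).map (algebraMap F L))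
    {D : L ⊗[k] A → L ⊗[k] A} (hD : IsRingDeriv D)
    (hDtmul : ∀ y x, D (y ⊗ₜ[k] x) = δL y ⊗ₜ[k] x + y ⊗ₜ[k] d x) (z : L ⊗[k] A) :
    e' (D z) = (e' z).map δL + ⁅M.map (algebraMap F L), e' z⁆ := by
  induction z with
  | zero => simp [hD.map_zero, Matrix.map_zero _ hδL.map_zero, Ring.lie_def]
  | add z w hz hw =>
    rw [hD.map_add, map_add, hz, hw, map_add, Matrix.map_add _ hδL.map_add]
    simp only [Ring.lie_def]
    noncomm_ring
  | tmul y x =>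
    have hmap : ((e (1 ⊗ₜ[k] x)).map δF).map (algebraMap F L) =
        ((e (1 ⊗ₜ[k] x)).map (algebraMap F L)).map δL := by
      ext i j; exact (hL _).symm
    have hlie : (⁅M, e (1 ⊗ₜ[k] x)⁆).map (algebraMap F L) =
        ⁅M.map (algebraMap F L), (e (1 ⊗ₜ[k] x)).map (algebraMap F L)⁆ := by
      simp only [Ring.lie_def, Matrix.map_sub _ (map_sub _), Matrix.map_mul]
    rw [hDtmul, map_add, he', he', he', hM, Matrix.map_add _ (map_add _), hmap, hlie,
      hδL.mapMatrix.map_smul hδL.restrictsTo_mapMatrix]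
    simp only [Ring.lie_def, smul_add, smul_sub, smul_mul_assoc, mul_smul_comm]
    abel

end Twist

section GenericMatrix

variable {n : Type*} (o : n)

/-- The coordinate ring of the affine space of `n × n` matrices over `R` with `(o, o)` entry `1`. -/
abbrev NormalizedMatrixRing (R : Type*) [CommRing R] : Type _ :=
  MvPolynomial {p : n × n // p ≠ (o, o)} R

/-- The function field of `PGL_n` over `F`, presented through the affine chart of matrices with
`(o, o)` entry `1`. -/
abbrev PGLFunctionField (F : Type*) [Field F] : Type _ :=
  FractionRing (NormalizedMatrixRing o F)

theorem trdeg_pglFunctionField {k F : Type*} [Field k] [Field F] [Algebra k F]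
    [Algebra.IsAlgebraic k F] [Fintype n] :
    Algebra.trdeg k (PGLFunctionField o F) = (Fintype.card n ^ 2 - 1 : ℕ) := by
  classical
  have : Algebra.IsAlgebraic (NormalizedMatrixRing o F) (PGLFunctionField o F) :=
    IsLocalization.isAlgebraic _ (nonZeroDivisors _)
  have htrdeg : Algebra.trdeg F (PGLFunctionField o F) = (Fintype.card n ^ 2 - 1 : ℕ) := by
    rw [← trdeg_add_eq F (NormalizedMatrixRing o F), MvPolynomial.trdeg_of_isDomain, trdeg_eq_zero]
    simp [Fintype.card_subtype_compl, sq]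
  simpa [htrdeg, trdeg_eq_zero] using (lift_trdeg_add_eq k F (PGLFunctionField o F)).symm

variable [DecidableEq n]

/-- The generic `n × n` matrix over `R` with `(o, o)` entry `1`: its other entries are independent
variables. -/
noncomputable def normalizedGenericMatrix (R : Type*) [CommRing R] :
    Matrix n n (NormalizedMatrixRing o R) :=
  .of fun i j => if h : (i, j) = (o, o) then 1 else X ⟨(i, j), h⟩

theorem normalizedGenericMatrix_self (R : Type*) [CommRing R] :
    normalizedGenericMatrix o R o o = 1 := dif_pos rfl

theorem normalizedGenericMatrix_of_ne (R : Type*) [CommRing R] {i j : n} (h : (i, j) ≠ (o, o)) :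
    normalizedGenericMatrix o R i j = X ⟨(i, j), h⟩ := dif_neg h

variable [Fintype n] {R : Type*} [CommRing R]

theorem det_normalizedGenericMatrix_ne_zero [Nontrivial R] :
    (normalizedGenericMatrix o R).det ≠ 0 := fun h => by
  let ev : NormalizedMatrixRing o R →+* R :=
    eval fun p => (1 : Matrix n n R) p.1.1 p.1.2
  have hev : ev.mapMatrix (normalizedGenericMatrix o R) = 1 := by
    ext i j
    by_cases hij : (i, j) = (o, o)
    · cases hij
      simp [normalizedGenericMatrix_self]
    · simp [normalizedGenericMatrix_of_ne o R hij, ev]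
  have hdet := ev.map_det (normalizedGenericMatrix o R)
  rw [h, map_zero, hev, Matrix.det_one] at hdet
  exact zero_ne_one hdet

-- Subtracting a scalar from `N` does not change `⁅N, ·⁆` and keeps the `(o, o)` entry constant.
theorem IsRingDeriv.exists_map_normalizedGenericMatrix_eq {δ : R → R} (hδ : IsRingDeriv δ)
    (N : Matrix n n (NormalizedMatrixRing o R)) :
    ∃ D : NormalizedMatrixRing o R → NormalizedMatrixRing o R,
      IsRingDeriv D ∧ RestrictsTo δ D ∧ ∃ f : NormalizedMatrixRing o R,
        (normalizedGenericMatrix o R).map D =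
          normalizedGenericMatrix o R * N - f • normalizedGenericMatrix o R := by
  let P := normalizedGenericMatrix o R
  let f := (P * N) o o
  obtain ⟨D, hD, hδD, hDX⟩ := hδ.exists_extension_mvPolynomial
    fun p : {p : n × n // p ≠ (o, o)} => (P * N) p.1.1 p.1.2 - f * P p.1.1 p.1.2
  refine ⟨D, hD, hδD, f, ?_⟩
  ext1 i j
  by_cases hij : (i, j) = (o, o)
  · cases hij
    simp [normalizedGenericMatrix_self, hD.map_one, f, P]
  · simp [normalizedGenericMatrix_of_ne o R hij, hDX, P]

theorem IsRingDeriv.exists_units_pglFunctionField {F : Type*} [Field F] {δ : F → F}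
    (hδ : IsRingDeriv δ) (M : Matrix n n F) :
    ∃ δL : PGLFunctionField o F → PGLFunctionField o F, IsRingDeriv δL ∧ RestrictsTo δ δL ∧
      ∃ (G : (Matrix n n (PGLFunctionField o F))ˣ) (f : PGLFunctionField o F),
        G.val.map δL = G.val * M.map (algebraMap F _) - f • G.val := by
  let P := NormalizedMatrixRing o F
  let L := PGLFunctionField o F
  obtain ⟨D, hD, hδD, f, hf⟩ :=
    hδ.exists_map_normalizedGenericMatrix_eq o (M.map (algebraMap F P))
  have : Algebra.FormallyEtale P L := .of_isLocalization (nonZeroDivisors P)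
  obtain ⟨δL, hδL, hDL⟩ := hD.exists_extension_of_formallyEtale (S := L)
  let G := (algebraMap P L).mapMatrix (normalizedGenericMatrix o F)
  have hG : IsUnit G.det := by
    rw [← RingHom.map_det, isUnit_iff_ne_zero]
    exact (map_ne_zero_iff _ (IsFractionRing.injective P L)).mpr
      (det_normalizedGenericMatrix_ne_zero o)
  refine ⟨δL, hδL, hδD.trans hDL, G.nonsingInvUnit hG, algebraMap P L f, ?_⟩
  have hmap : G.map δL = (algebraMap P L).mapMatrix ((normalizedGenericMatrix o F).map D) := by
    ext i j; exact hDL _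
  have hM : M.map (algebraMap F L) = (algebraMap P L).mapMatrix (M.map (algebraMap F P)) := by
    ext i j; exact IsScalarTower.algebraMap_apply F P L _
  change G.map δL = _
  have hsmul (B : Matrix n n P) :
      (algebraMap P L).mapMatrix (f • B) = algebraMap P L f • (algebraMap P L).mapMatrix B := by
    ext i j; exact map_mul (algebraMap P L) _ _
  rw [hmap, hf, map_sub, map_mul, hM, hsmul]
  rfl

end GenericMatrix

theorem IsRingDeriv.exists_split_pglFunctionField {k F A n : Type*} [CommRing k] [Field F]
    [Algebra k F] [Ring A] [Algebra k A] [Fintype n] [DecidableEq n] (o : n)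
    {δ : k → k} {δF : F → F} {d : A → A} (hδF : IsRingDeriv δF) (hF : RestrictsTo δ δF)
    (hd : IsRingDeriv d) (hA : RestrictsTo δ d) (e : F ⊗[k] A ≃ₐ[F] Matrix n n F) :
    ∃ δL : PGLFunctionField o F → PGLFunctionField o F, IsRingDeriv δL ∧ RestrictsTo δ δL ∧
      ∃ D : PGLFunctionField o F ⊗[k] A → PGLFunctionField o F ⊗[k] A, IsRingDeriv D ∧
        (∀ y x, D (y ⊗ₜ[k] x) = δL y ⊗ₜ[k] x + y ⊗ₜ[k] d x) ∧
        ∃ φ : PGLFunctionField o F ⊗[k] A ≃ₐ[PGLFunctionField o F] Matrix n n _,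
          ∀ z, φ (D z) = (φ z).map δL := by
  obtain ⟨M, hM⟩ := exists_map_tmul_eq_map_add_lie hδF hF hd hA e
  obtain ⟨δL, hδL, hFL, G, f, hG⟩ := hδF.exists_units_pglFunctionField o M
  obtain ⟨D, hD, hDtmul⟩ := hδL.exists_tensorProduct (hF.trans hFL) hd hA
  obtain ⟨e', he'⟩ := exists_algEquiv_matrix_baseChange (PGLFunctionField o F) e
  let conj := MulSemiringAction.toAlgEquiv (PGLFunctionField o F)
    (Matrix n n (PGLFunctionField o F)) (ConjAct.toConjAct G)
  refine ⟨δL, hδL, hF.trans hFL, D, hD, hDtmul, e'.trans conj, fun z => ?_⟩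
  have hconj (X) : conj X = G.val * X * G⁻¹.val := rfl
  have hG' : G.val.map δL = G.val * (M.map (algebraMap F _) - f • 1) := by
    rw [hG, mul_sub, mul_smul_comm, mul_one]
  have hgauge := hδL.mapMatrix.map_units_conj hG' (e' z)
  rw [AlgEquiv.trans_apply, AlgEquiv.trans_apply, hconj, hconj, hgauge,
    map_derivation_eq_map_add_lie hδL hFL hM he' hD hDtmul]
  simp [Ring.lie_def, sub_mul, mul_sub]

theorem trdegLE_of_trdeg_le {k L : Type*} [CommRing k] [Nontrivial k] [CommRing L] [Algebra k L]
    {m : ℕ} (h : Algebra.trdeg k L ≤ m) : TrdegLE k L m := fun f hf => by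
  have hcard := hf.lift_cardinalMk_le_trdeg.trans (Cardinal.lift_le.mpr h)
  simp only [Cardinal.mk_fin, Cardinal.lift_natCast, Nat.cast_le] at hcard
  omega

section Quaternion

variable {R A : Type*} [CommRing R] [Ring A] [Algebra R A] {c₁ c₂ c₃ : R}

theorem bijective_quaternionLiftHom (q : QuaternionAlgebra.Basis A c₁ c₂ c₃)
    (b : Module.Basis (Fin 4) R A) (hb : ⇑b = ![1, q.i, q.j, q.k]) :
    Function.Bijective q.liftHom := by
  have h : ⇑q.liftHom =
      (QuaternionAlgebra.basisOneIJK c₁ c₂ c₃).equivFun.trans b.equivFun.symm := by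
    ext x
    simp [Module.Basis.equivFun_symm_apply, hb, Fin.sum_univ_four, QuaternionAlgebra.Basis.lift,
      Algebra.algebraMap_eq_smul_one]
  rw [h]
  exact LinearEquiv.bijective _

/-- The quaternion generators `1 ⊗ i, 1 ⊗ j` of `F ⊗[R] A` obtained from generators `i, j` of `A`
by extending scalars. -/
def quaternionBasisBaseChange (F : Type*) [CommRing F] [Algebra R F]
    (q : QuaternionAlgebra.Basis A c₁ c₂ c₃) :
    QuaternionAlgebra.Basis (F ⊗[R] A)
      (algebraMap R F c₁) (algebraMap R F c₂) (algebraMap R F c₃) where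
  i := 1 ⊗ₜ q.i
  j := 1 ⊗ₜ q.j
  k := 1 ⊗ₜ q.k
  i_mul_i := by simp [q.i_mul_i, tmul_add, Algebra.TensorProduct.one_def]
  j_mul_j := by simp [q.j_mul_j, Algebra.TensorProduct.one_def]
  i_mul_j := by simp [q.i_mul_j]
  j_mul_i := by simp [q.j_mul_i, tmul_sub]

end Quaternion

section SplitQuaternion

/-- The anticommuting matrices `diag(s, -s)` and `!![0, c; 1, 0]`, of squares `s²` and `c`: they
identify `M₂(R)` with the quaternion algebra `(s², c)` as soon as `2`, `s` and `c` are units. -/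
def matrixQuaternionBasis {R : Type*} [CommRing R] (s c : R) :
    QuaternionAlgebra.Basis (Matrix (Fin 2) (Fin 2) R) (s * s) 0 c where
  i := !![s, 0; 0, -s]
  j := !![0, c; 1, 0]
  k := !![0, s * c; -s, 0]
  i_mul_i := by simp [Matrix.one_fin_two]
  j_mul_j := by simp [Matrix.one_fin_two]
  i_mul_j := by simp
  j_mul_i := by simp [mul_comm]

theorem linearIndependent_matrixQuaternionBasis {R : Type*} [CommRing R] [IsDomain R]
    [NeZero (2 : R)] {s c : R} (hs : s ≠ 0) (hc : c ≠ 0) :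
    LinearIndependent R
      ![1, (matrixQuaternionBasis s c).i, (matrixQuaternionBasis s c).j,
        (matrixQuaternionBasis s c).k] := by
  refine Fintype.linearIndependent_iff.mpr fun g hg => ?_
  have h (i j) := congrFun₂ hg i j
  simp only [matrixQuaternionBasis, Fin.sum_univ_four, Matrix.cons_val] at h
  have h2 : (2 : R) ≠ 0 := two_ne_zero
  have h₀₀ : g 0 + g 1 * s = 0 := by simpa using h 0 0
  have h₀₁ : g 2 * c + g 3 * (s * c) = 0 := by simpa using h 0 1
  have h₁₀ : g 2 - g 3 * s = 0 := by simpa [sub_eq_add_neg] using h 1 0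
  have h₁₁ : g 0 - g 1 * s = 0 := by simpa [sub_eq_add_neg] using h 1 1
  have hg0 : 2 * g 0 = 0 := by linear_combination h₀₀ + h₁₁
  have hg1 : 2 * s * g 1 = 0 := by linear_combination h₀₀ - h₁₁
  have hg2 : 2 * c * g 2 = 0 := by linear_combination h₀₁ + c * h₁₀
  have hg3 : 2 * s * c * g 3 = 0 := by linear_combination h₀₁ - c * h₁₀
  simp_all [Fin.forall_fin_succ]

variable {F : Type*} [Field F] [NeZero (2 : F)]

theorem nonempty_algEquiv_matrix_of_quaternionBasis {A : Type*} [Ring A] [Algebra F A]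
    {s c : F} (hs : s ≠ 0) (hc : c ≠ 0) (q : QuaternionAlgebra.Basis A (s * s) 0 c)
    (b : Module.Basis (Fin 4) F A) (hb : ⇑b = ![1, q.i, q.j, q.k]) :
    Nonempty (A ≃ₐ[F] Matrix (Fin 2) (Fin 2) F) := by
  let bM := basisOfLinearIndependentOfCardEqFinrank
    (linearIndependent_matrixQuaternionBasis hs hc) (by simp [Module.finrank_matrix])
  have hbM := bijective_quaternionLiftHom (matrixQuaternionBasis s c) bM
    (coe_basisOfLinearIndependentOfCardEqFinrank _ _)
  exact ⟨(AlgEquiv.ofBijective _ (bijective_quaternionLiftHom q b hb)).symm.trans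
    (AlgEquiv.ofBijective _ hbM)⟩

theorem nonempty_tensorProduct_algEquiv_matrix_of_isSepClosed {k : Type*} [Field k] [Algebra k F]
    [IsSepClosed F] {A : Type*} [Ring A] [Algebra k A] {α β : k} (hα : α ≠ 0)
    (hβ : β ≠ 0) (q : QuaternionAlgebra.Basis A α 0 β)
    (b : Module.Basis (Fin 4) k A) (hb : ⇑b = ![1, q.i, q.j, q.k]) :
    Nonempty (F ⊗[k] A ≃ₐ[F] Matrix (Fin 2) (Fin 2) F) := by
  obtain ⟨s, hs⟩ := IsSepClosed.exists_eq_mul_self (algebraMap k F α)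
  have hs0 : s ≠ 0 := fun h => hα (by simpa [h] using hs)
  have hβ0 : algebraMap k F β ≠ 0 := (map_ne_zero _).mpr hβ
  obtain ⟨q', hi, hj, hk⟩ :
      ∃ q' : QuaternionAlgebra.Basis (F ⊗[k] A) (s * s) 0 (algebraMap k F β),
        q'.i = 1 ⊗ₜ q.i ∧ q'.j = 1 ⊗ₜ q.j ∧ q'.k = 1 ⊗ₜ q.k := by
    rw [← hs, ← map_zero (algebraMap k F)]
    exact ⟨quaternionBasisBaseChange F q, rfl, rfl, rfl⟩
  refine nonempty_algEquiv_matrix_of_quaternionBasis hs0 hβ0 q' (b.baseChange F) ?_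
  ext i
  fin_cases i <;> simp [hi, hj, hk, hb, Algebra.TensorProduct.one_def]

end SplitQuaternion

theorem stmt_5_general {k : Type u} [Field k] [NeZero (2 : k)] {δk : k → k} (hδk : IsRingDeriv δk)
    {α β : k} (hα : α ≠ 0) (hβ : β ≠ 0) {Q : Type*} [Ring Q] [Algebra k Q] {u v : Q}
    (hu : u * u = algebraMap k Q α) (hv : v * v = algebraMap k Q β) (huv : v * u = -(u * v))
    (bQ : Module.Basis (Fin 4) k Q) (hbQ : ⇑bQ = ![1, u, v, u * v])
    {d : Q → Q} (hd : IsRingDeriv d) (hdk : RestrictsTo δk d) :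
    ∃ (L : Type u) (_ : Field L) (_ : Algebra k L) (δL : L → L),
      IsRingDeriv δL ∧ RestrictsTo δk δL ∧ TrdegLE k L 3 ∧ DiffSplits k Q d L δL := by
  let F := SeparableClosure k
  have : NeZero (2 : F) :=
    ⟨by simpa only [map_ofNat] using (map_ne_zero (algebraMap k F)).mpr two_ne_zero⟩
  have : Algebra.FormallyEtale k F := .of_isSeparable k F
  obtain ⟨δF, hδF, hkF⟩ := hδk.exists_extension_of_formallyEtale (S := F)
  let q : QuaternionAlgebra.Basis Q α 0 β :=
    { i := u
      j := v
      k := u * v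
      i_mul_i := by simp [hu, Algebra.algebraMap_eq_smul_one]
      j_mul_j := by simp [hv, Algebra.algebraMap_eq_smul_one]
      i_mul_j := rfl
      j_mul_i := by simp [huv] }
  obtain ⟨e⟩ := nonempty_tensorProduct_algEquiv_matrix_of_isSepClosed (F := F) hα hβ q bQ hbQ
  obtain ⟨δL, hδL, hkL, hsplit⟩ :=
    hδF.exists_split_pglFunctionField (0 : Fin 2) hkF hd hdk e
  exact ⟨PGLFunctionField 0 F, inferInstance, inferInstance, δL, hδL, hkL,
    trdegLE_of_trdeg_le (by simp [trdeg_pglFunctionField]), hsplit⟩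

/-- Every differential quaternion algebra `(Q, d)` over a differential
field `(k, ′)` of characteristic zero is split by a differential field extension of
transcendence degree at most `3` over `k`. -/
theorem stmt_5 (k : Type u) [Field k] [CharZero k]
    (δk : k → k) (hδk : IsRingDeriv δk)
    (α β : k) (hα : α ≠ 0) (hβ : β ≠ 0)
    (Q : Type u) [Ring Q] [Algebra k Q]
    (u v : Q) (hu : u * u = algebraMap k Q α) (hv : v * v = algebraMap k Q β)
    (huv : v * u = -(u * v))
    (bQ : Module.Basis (Fin 4) k Q) (hbQ : ⇑bQ = ![1, u, v, u * v])
    (d : Q → Q) (hd : IsRingDeriv d) (hdk : RestrictsTo δk d) :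
    ∃ (L : Type u) (_ : Field L) (_ : Algebra k L) (δL : L → L),
      IsRingDeriv δL ∧ RestrictsTo δk δL ∧ TrdegLE k L 3 ∧ DiffSplits k Q d L δL :=
  stmt_5_general hδk hα hβ hu hv huv bQ hbQ hd hdk
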